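/- Addition formula for the elliptic 6j-symbols: for integers 0 ≤ n, m ≤ k and all α, β, γ, δ, ρ, σ ∈ ℂ such that every bracket appearing in a denominator of the R-symbols involved is nonzero, one has R_n^m(α,β,γ,δ;k) = Σ_{l=0}^{k} R_n^l(α,β,ρ,σ;k) · R_l^m(ρ,σ,γ,δ;k). -/

import Mathlib

noncomputable section

open Complex Finset

namespace Ell

/-- `x^s = exp(-iπ s /(r τ))`. -/
def xp (τ : ℂ) (r : ℝ) (s : ℂ) : ℂ :=
  Complex.exp (-Complex.I * (Real.pi : ℂ) * s / ((r : ℂ) * τ))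

/-- `Θ_p(z) = ∏_{j ≥ 0} (1 - z p^j)(1 - p^{j+1}/z)(1 - p^{j+1})`. -/
def Theta (p z : ℂ) : ℂ :=
  ∏' j : ℕ, ((1 - z * p ^ j) * (1 - p ^ (j + 1) / z) * (1 - p ^ (j + 1)))

/-- The bracket `[u] = x^{u²/r - u} Θ_p(x^{2u})` with `p = x^{2r}`. -/
def br (τ : ℂ) (r : ℝ) (u : ℂ) : ℂ :=
  xp τ r (u ^ 2 / (r : ℂ) - u) * Theta (xp τ r (2 * (r : ℂ))) (xp τ r (2 * u))

/-- Elliptic shifted factorial `[u]_n = ∏_{j=0}^{n-1} [u+j]`. -/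
def brF (τ : ℂ) (r : ℝ) (u : ℂ) (n : ℕ) : ℂ :=
  ∏ j ∈ Finset.range n, br τ r (u + (j : ℂ))

/-- Elliptic binomial coefficient `C_n^k(α,β,γ)`. -/
def Cnk (τ : ℂ) (r : ℝ) (k n : ℕ) (α β γ : ℂ) : ℂ :=
  brF τ r 1 k / (brF τ r 1 n * brF τ r 1 (k - n)) *
    (brF τ r (α - γ) n * brF τ r (α + γ + (k : ℂ) - (n : ℂ)) n *
      brF τ r (α - β) (k - n) * brF τ r (α + β + (n : ℂ)) (k - n)) /
    (brF τ r (β - γ + (n : ℂ) - (k : ℂ)) n * brF τ r (γ - β - (n : ℂ)) (k - n) *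
      brF τ r (β + γ) k)

/-- The elliptic 6j-symbol `R_n^m(α,β,γ,δ;k)`. -/
def Rnm (τ : ℂ) (r : ℝ) (k n m : ℕ) (α β γ δ : ℂ) : ℂ :=
  ∑ j ∈ Finset.range (min n m + 1),
    Cnk τ r n j α γ (β + (k : ℂ) - (n : ℂ)) * Cnk τ r (k - j) (m - j) β (γ + (j : ℂ)) δ

/-- Terminating very-well-poised elliptic hypergeometric sum with explicit
truncation `N`:  `Σ_{j=0}^N ([u₀+2j]/[u₀]) ([u₀]_j/[1]_j) ∏ᵢ [uᵢ]_j/[u₀+1-uᵢ]_j`. -/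
def Vsum (τ : ℂ) (r : ℝ) (u₀ : ℂ) (us : List ℂ) (N : ℕ) : ℂ :=
  ∑ j ∈ Finset.range (N + 1),
    br τ r (u₀ + 2 * (j : ℂ)) / br τ r u₀ * (brF τ r u₀ j / brF τ r 1 j) *
      (us.map fun ui => brF τ r ui j / brF τ r (u₀ + 1 - ui) j).prod

/-- "Every bracket appearing in a denominator of `C_n^k(·,β,γ)` is nonzero". -/
def CdenomNZ (τ : ℂ) (r : ℝ) (k n : ℕ) (β γ : ℂ) : Prop :=
  brF τ r 1 n ≠ 0 ∧ brF τ r 1 (k - n) ≠ 0 ∧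
    brF τ r (β - γ + (n : ℂ) - (k : ℂ)) n ≠ 0 ∧
    brF τ r (γ - β - (n : ℂ)) (k - n) ≠ 0 ∧ brF τ r (β + γ) k ≠ 0

/-- "Every bracket appearing in a denominator of `R_n^m(α,β,γ,δ;k)` is nonzero". -/
def RdenomNZ (τ : ℂ) (r : ℝ) (k n m : ℕ) (β γ δ : ℂ) : Prop :=
  ∀ j ≤ min n m,
    CdenomNZ τ r n j γ (β + (k : ℂ) - (n : ℂ)) ∧
      CdenomNZ τ r (k - j) (m - j) (γ + (j : ℂ)) δ

/-- Jacobi theta `ϑ₁(v|σ)`. -/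
def th1 (v σ : ℂ) : ℂ :=
  2 * Complex.exp (2 * (Real.pi : ℂ) * Complex.I * σ / 8) *
    (∏' n : ℕ, (1 - Complex.exp (2 * (Real.pi : ℂ) * Complex.I * σ) ^ (n + 1))) *
    Complex.sin ((Real.pi : ℂ) * v) *
    ∏' n : ℕ,
      (1 - 2 * Complex.exp (2 * (Real.pi : ℂ) * Complex.I * σ) ^ (n + 1) *
            Complex.cos (2 * (Real.pi : ℂ) * v) +
        Complex.exp (2 * (Real.pi : ℂ) * Complex.I * σ) ^ (2 * (n + 1)))

/-- Jacobi theta `ϑ₀(v|σ)`. -/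
def th0 (v σ : ℂ) : ℂ :=
  -Complex.I * Complex.exp ((Real.pi : ℂ) * Complex.I * (v + σ / 4)) * th1 (v + σ / 2) σ

/-- Jacobi theta `ϑ₂(v|σ)`. -/
def th2 (v σ : ℂ) : ℂ := th1 (v + 1 / 2) σ

/-- Jacobi theta `ϑ₃(v|σ)`. -/
def th3 (v σ : ℂ) : ℂ :=
  Complex.exp ((Real.pi : ℂ) * Complex.I * (v + σ / 4)) * th1 (v + (σ + 1) / 2) σ

/-- Intertwining vector component `ψ_ε(u)^a_b`, `ε ∈ {1, -1}`. -/
def psi (τ : ℂ) (r : ℝ) (u : ℂ) (ε : ℤ) (a b : ℤ) : ℂ :=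
  if ε = 1 then th0 ((((a : ℂ) - (b : ℂ)) * u + (a : ℂ)) / (2 * (r : ℂ))) (τ / 2)
  else th3 ((((a : ℂ) - (b : ℂ)) * u + (a : ℂ)) / (2 * (r : ℂ))) (τ / 2)

/-- The constant `C = x^{-r/4} e^{-iπ/4} τ^{1/2}`. -/
def Cc (τ : ℂ) (r : ℝ) : ℂ :=
  xp τ r (-(r : ℂ) / 4) * Complex.exp (-(Real.pi : ℂ) * Complex.I / 4) * τ ^ (1 / 2 : ℂ)

/-- Dual intertwining vector component `ψ*_ε(u)^a_b = -ε(a-b) C² ψ_{-ε}(u-1)^a_b/(2[b][u])`. -/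
def psiStar (τ : ℂ) (r : ℝ) (u : ℂ) (ε : ℤ) (a b : ℤ) : ℂ :=
  -(ε : ℂ) * ((a : ℂ) - (b : ℂ)) * Cc τ r ^ 2 * psi τ r (u - 1) (-ε) a b /
    (2 * br τ r (b : ℂ) * br τ r u)

/-- Sign attached to a boolean. -/
def sg (b : Bool) : ℤ := if b then 1 else -1

/-- Canonical path from `a`: up for `j ≤ n`, down afterwards. -/
def cpathZ (a n : ℤ) (j : ℕ) : ℤ := if (j : ℤ) ≤ n then a + j else a + 2 * n - j

/-- Admissibility: `a - b ∈ {-k, -k+2, …, k}`. -/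
def adm (k : ℕ) (a b : ℤ) : Prop := (a - b).natAbs ≤ k ∧ (a - b - (k : ℤ)) % 2 = 0

instance (k : ℕ) (a b : ℤ) : Decidable (adm k a b) := by unfold adm; infer_instance

/-- Fused intertwining vector component `ψ^{(k)}_μ(u)^a_b` (zero if `a,b` not admissible). -/
def psiF (τ : ℂ) (r : ℝ) (k : ℕ) (μ : ℤ) (u : ℂ) (a b : ℤ) : ℂ :=
  if adm k a b then
    ∑ ε ∈ Finset.univ.filter fun ε : Fin k → Bool => (∑ j, sg (ε j)) = μ,
      ∏ j : Fin k,
        psi τ r (u + (k : ℂ) - (((j : ℕ) + 1 : ℕ) : ℂ)) (sg (ε j))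
          (cpathZ a (((k : ℤ) - (a - b)) / 2) (j : ℕ))
          (cpathZ a (((k : ℤ) - (a - b)) / 2) ((j : ℕ) + 1))
  else 0

/-- Partial-sum path attached to a sign sequence `δ`, starting at `a`. -/
def spath (k : ℕ) (a : ℤ) (δ : Fin k → Bool) (j : ℕ) : ℤ :=
  a + ∑ i ∈ Finset.range j, if h : i < k then sg (δ ⟨i, h⟩) else 0

/-- Fused dual intertwining vector component `ψ*^{(k)}_μ(u)^b_a`
(sum over all admissible paths from `a` to `b`; zero if not admissible). -/
def psiStarF (τ : ℂ) (r : ℝ) (k : ℕ) (μ : ℤ) (u : ℂ) (b a : ℤ) : ℂ :=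
  if adm k a b then
    ∑ δ ∈ Finset.univ.filter fun δ : Fin k → Bool => (∑ j, sg (δ j)) = b - a,
      ∏ j : Fin k,
        psiStar τ r (u + (k : ℂ) - (((j : ℕ) + 1 : ℕ) : ℂ))
          (if ((j : ℕ) + 1 : ℤ) ≤ ((k : ℤ) + μ) / 2 then 1 else -1)
          (spath k a δ ((j : ℕ) + 1)) (spath k a δ (j : ℕ))
  else 0

/-- The `L`-matrix `L^{(k)}(a,b;c,d|u) = Σ_μ ψ*^{(k)}_μ(u)^d_c ψ^{(k)}_μ(u)^a_b`. -/
def Lk (τ : ℂ) (r : ℝ) (k : ℕ) (u : ℂ) (a b c d : ℤ) : ℂ :=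
  ∑ i ∈ Finset.range (k + 1),
    psiStarF τ r k ((k : ℤ) - 2 * (i : ℤ)) u d c * psiF τ r k ((k : ℤ) - 2 * (i : ℤ)) u a b

/-- Normalized face weight `W̄(a,b;d,c|u)` (arguments ordered (NW, NE; SW, SE)). -/
def Wb (τ : ℂ) (r : ℝ) (u : ℂ) (a b d c : ℤ) : ℂ :=
  if b = a + 1 ∧ d = a + 1 ∧ c = a + 2 then 1
  else if b = a - 1 ∧ d = a - 1 ∧ c = a - 2 then 1
  else if b = a + 1 ∧ d = a + 1 ∧ c = a then
    br τ r ((a : ℂ) - u) * br τ r 1 / (br τ r (a : ℂ) * br τ r (1 + u))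
  else if b = a - 1 ∧ d = a - 1 ∧ c = a then
    br τ r ((a : ℂ) + u) * br τ r 1 / (br τ r (a : ℂ) * br τ r (1 + u))
  else if b = a + 1 ∧ d = a - 1 ∧ c = a then
    br τ r ((a : ℂ) + 1) * br τ r u / (br τ r (a : ℂ) * br τ r (1 + u))
  else if b = a - 1 ∧ d = a + 1 ∧ c = a then
    br τ r ((a : ℂ) - 1) * br τ r u / (br τ r (a : ℂ) * br τ r (1 + u))
  else 0

/-- Sequence with prescribed endpoints `d`, `c` and free interior values `f`. -/
def seqI (k : ℕ) (d c : ℤ) (f : Fin (k - 1) → ℤ) (j : ℕ) : ℤ :=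
  if h0 : j = 0 then d
  else if hj : j < k then f ⟨j - 1, by omega⟩ else c

/-- Fused face weight `W^{(k,1)}(a,b;d,c|u)`. -/
def Wk1 (τ : ℂ) (r : ℝ) (k : ℕ) (u : ℂ) (a b d c : ℤ) : ℂ :=
  if adm k a b then
    ∑' f : Fin (k - 1) → ℤ,
      ∏ j ∈ Finset.range k,
        Wb τ r (u + (k : ℂ) - ((j : ℂ) + 1))
          (cpathZ a (((k : ℤ) - (a - b)) / 2) j)
          (cpathZ a (((k : ℤ) - (a - b)) / 2) (j + 1))
          (seqI k d c f j) (seqI k d c f (j + 1))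
  else 0

/-- Fused face weight `W^{(k,l)}(a,b;d,c|u)`. -/
def Wkl (τ : ℂ) (r : ℝ) (k l : ℕ) (u : ℂ) (a b d c : ℤ) : ℂ :=
  if adm l b c then
    ∑' g : Fin (l - 1) → ℤ,
      ∏ i ∈ Finset.range l,
        Wk1 τ r k (u - (l : ℂ) + ((i : ℂ) + 1))
          (seqI l a d g i) (cpathZ b (((l : ℤ) - (b - c)) / 2) i)
          (seqI l a d g (i + 1)) (cpathZ b (((l : ℤ) - (b - c)) / 2) (i + 1))
  else 0

/-- Eight-vertex weight `ā(u)`. -/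
def aw (τ : ℂ) (r : ℝ) (u : ℂ) : ℂ :=
  th2 (1 / (2 * (r : ℂ))) (τ / 2) * th2 (u / (2 * (r : ℂ))) (τ / 2) /
    (th2 0 (τ / 2) * th2 ((1 + u) / (2 * (r : ℂ))) (τ / 2))

/-- Eight-vertex weight `b̄(u)`. -/
def bw (τ : ℂ) (r : ℝ) (u : ℂ) : ℂ :=
  th2 (1 / (2 * (r : ℂ))) (τ / 2) * th1 (u / (2 * (r : ℂ))) (τ / 2) /
    (th2 0 (τ / 2) * th1 ((1 + u) / (2 * (r : ℂ))) (τ / 2))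

/-- Eight-vertex weight `c̄(u)`. -/
def cw (τ : ℂ) (r : ℝ) (u : ℂ) : ℂ :=
  th1 (1 / (2 * (r : ℂ))) (τ / 2) * th2 (u / (2 * (r : ℂ))) (τ / 2) /
    (th2 0 (τ / 2) * th1 ((1 + u) / (2 * (r : ℂ))) (τ / 2))

/-- Eight-vertex weight `d̄(u)`. -/
def dw (τ : ℂ) (r : ℝ) (u : ℂ) : ℂ :=
  -(th1 (1 / (2 * (r : ℂ))) (τ / 2) * th1 (u / (2 * (r : ℂ))) (τ / 2)) /
    (th2 0 (τ / 2) * th2 ((1 + u) / (2 * (r : ℂ))) (τ / 2))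

/-- The normalized eight-vertex `R`-matrix entry `R̄(u)_{(ε₁,ε₂),(ε₁',ε₂')}`. -/
def Rbar (τ : ℂ) (r : ℝ) (u : ℂ) (e1 e2 e1' e2' : ℤ) : ℂ :=
  if e1' = e1 ∧ e2' = e2 ∧ e1 = e2 then aw τ r u
  else if e1' = e1 ∧ e2' = e2 ∧ e1 = -e2 then bw τ r u
  else if e1' = e2 ∧ e2' = e1 ∧ e1 = -e2 then cw τ r u
  else if e1' = -e1 ∧ e2' = -e2 ∧ e1 = e2 then dw τ r u
  else 0

/-- Sklyanin standard-basis vector `v_+(z)`. -/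
def vp (τ z : ℂ) : ℂ := th3 (2 * z) (2 * τ) - th2 (2 * z) (2 * τ)

/-- Sklyanin standard-basis vector `v_-(z)`. -/
def vm (τ z : ℂ) : ℂ := th3 (2 * z) (2 * τ) + th2 (2 * z) (2 * τ)

/-!
The products `[a ± z]_k = [a + z]_k [a - z]_k` satisfy a binomial theorem: `[α ± z]_k` is the
combination of the products `[β ± z]_n [γ ± z]_{k-n}` with coefficients `C_n^k(α,β,γ)`. It follows
by induction on `k` from Weierstrass' three-term relation, which writes `[a ± z]` as a combination
of `[b ± z]` and `[c ± z]`. The three-term relation is in turn a formal consequence of a bilinear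
formula for `[u + v][u - v]`, obtained by multiplying two theta series (Jacobi's triple product)
and splitting the summation lattice by parity.

Applying the binomial theorem twice shows that `R_n^m(α,β,γ,δ;k)` are the coefficients of
`[α ± z]_n [β ± z]_{k-n}` in terms of the functions `[γ ± z]_m [δ ± z]_{k-m}`. For generic `γ` and
`δ` the latter are linearly independent, so the addition formula expresses the composition of two
changes of basis. The remaining `γ` and `δ` are reached by continuity along the line
`(γ + t, δ + 2t)`, on which genericity fails only at isolated values of `t`.
-/

open Filter Topology

section TripleProduct

/-- The `q`-factorial `(p;p)_n = (1 - p)(1 - p²)⋯(1 - pⁿ)`. -/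
def qFact (p : ℂ) (n : ℕ) : ℂ := ∏ i ∈ range n, (1 - p ^ (i + 1))

/-- The reciprocal `1 / (p;p)_m`, extended by `0` to negative `m`, so that `q`-binomial coefficients
outside their range vanish. -/
def qFactInv (p : ℂ) (m : ℤ) : ℂ := if m < 0 then 0 else (qFact p m.toNat)⁻¹

/-- The central `q`-binomial coefficient `(p;p)_{2N} / ((p;p)_{N-n} (p;p)_{N+n})`, zero unless
`|n| ≤ N`. -/
def centralQBinom (p : ℂ) (N : ℕ) (n : ℤ) : ℂ :=
  qFact p (2 * N) * qFactInv p (N - n) * qFactInv p (N + n)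

/-- The finite theta product `∏_{j < N} (1 - z p^j)(1 - p^{j+1}/z)`. -/
def thetaPartial (p z : ℂ) (N : ℕ) : ℂ :=
  ∏ j ∈ range N, ((1 - z * p ^ j) * (1 - p ^ (j + 1) / z))

variable {p z : ℂ}

lemma one_sub_pow_succ_ne_zero (hp : ‖p‖ < 1) (i : ℕ) : 1 - p ^ (i + 1) ≠ 0 := by
  intro h
  have hlt : ‖p ^ (i + 1)‖ < 1 := by
    rw [norm_pow]
    exact pow_lt_one₀ (norm_nonneg p) hp i.succ_ne_zero
  rw [← sub_eq_zero.mp h, norm_one] at hlt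
  exact lt_irrefl 1 hlt

lemma qFact_succ (p : ℂ) (n : ℕ) : qFact p (n + 1) = qFact p n * (1 - p ^ (n + 1)) :=
  prod_range_succ _ _

lemma qFactInv_of_neg (p : ℂ) {m : ℤ} (hm : m < 0) : qFactInv p m = 0 := if_pos hm

lemma qFactInv_natCast (p : ℂ) (n : ℕ) : qFactInv p n = (qFact p n)⁻¹ := by
  simp [qFactInv]

lemma qFactInv_sub_one (hp : ‖p‖ < 1) (m : ℤ) :
    qFactInv p (m - 1) = (1 - p ^ m) * qFactInv p m := by
  rcases lt_trichotomy m 0 with hm | rfl | hm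
  · rw [qFactInv_of_neg p hm, qFactInv_of_neg p (by lia), mul_zero]
  · rw [qFactInv_of_neg p (by lia), zpow_zero, sub_self, zero_mul]
  · obtain ⟨n, rfl⟩ : ∃ n : ℕ, m = (n + 1 : ℕ) := ⟨(m - 1).toNat, by lia⟩
    have hn := one_sub_pow_succ_ne_zero hp n
    rw [show ((n + 1 : ℕ) : ℤ) - 1 = n by simp, qFactInv_natCast, qFactInv_natCast, qFact_succ,
      zpow_natCast, mul_inv, mul_left_comm, mul_inv_cancel₀ hn, mul_one]

lemma centralQBinom_zero_left (p : ℂ) (n : ℤ) :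
    centralQBinom p 0 n = if n = 0 then 1 else 0 := by
  rcases lt_trichotomy n 0 with hn | rfl | hn
  · simp [centralQBinom, qFactInv_of_neg p hn, hn.ne]
  · simp [centralQBinom, qFactInv, qFact]
  · simp [centralQBinom, qFactInv_of_neg p (neg_lt_zero.mpr hn), hn.ne']

lemma centralQBinom_succ_left (hp0 : p ≠ 0) (hp : ‖p‖ < 1) (N : ℕ) (n : ℤ) :
    centralQBinom p (N + 1) n = (1 + p ^ (2 * N + 1)) * centralQBinom p N n +
      p ^ (N + 1 - n : ℤ) * centralQBinom p N (n - 1) +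
      p ^ (N + 1 + n : ℤ) * centralQBinom p N (n + 1) := by
  have lower (m m' : ℤ) (h : m = m' - 1) : qFactInv p m = (1 - p ^ m') * qFactInv p m' := by
    rw [h, qFactInv_sub_one hp]
  have hn : p ^ n ≠ 0 := zpow_ne_zero n hp0
  have hfact : qFact p (2 * (N + 1)) =
      qFact p (2 * N) * (1 - p * (p ^ N) ^ 2) * (1 - p ^ 2 * (p ^ N) ^ 2) := by
    rw [show 2 * (N + 1) = 2 * N + 1 + 1 by ring, qFact_succ, qFact_succ]
    ring
  simp only [centralQBinom, Nat.cast_add, Nat.cast_one]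
  rw [lower (N - (n + 1)) (N - n) (by ring), lower (N - n) (N + 1 - n) (by ring),
    lower (N + (n - 1)) (N + n) (by ring), lower (N + n) (N + 1 + n) (by ring), hfact,
    show (N : ℤ) - (n - 1) = N + 1 - n by ring, show (N : ℤ) + (n + 1) = N + 1 + n by ring,
    show p ^ (2 * N + 1) = p * (p ^ N) ^ 2 by ring]
  simp only [zpow_sub₀ hp0, zpow_add₀ hp0, zpow_natCast, zpow_one]
  field_simp
  ring

lemma thetaPartial_succ (hz : z ≠ 0) (N : ℕ) :
    thetaPartial p z (N + 1) = (1 + p ^ (2 * N + 1)) * thetaPartial p z N -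
      z * p ^ N * thetaPartial p z N - p ^ (N + 1) / z * thetaPartial p z N := by
  rw [thetaPartial, prod_range_succ, ← thetaPartial]
  field_simp
  ring

/-- The finite Jacobi triple product. The recursion encodes `T n = (-z)ⁿ p^{n(n-1)/2}` without
half-integral exponents. -/
lemma hasSum_mul_centralQBinom (hp0 : p ≠ 0) (hp : ‖p‖ < 1) (hz : z ≠ 0) {T : ℤ → ℂ}
    (hT0 : T 0 = 1) (hT : ∀ n, T (n + 1) = -(z * p ^ n) * T n) (N : ℕ) :
    HasSum (fun n ↦ T n * centralQBinom p N n) (thetaPartial p z N) := by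
  induction N with
  | zero =>
    convert hasSum_ite_eq (0 : ℤ) (1 : ℂ) using 2 with n
    · rw [centralQBinom_zero_left]
      split_ifs with hn
      · rw [hn, hT0, one_mul]
      · rw [mul_zero]
    · simp [thetaPartial]
  | succ N ih =>
    have shift_down := ((Equiv.subRight (1 : ℤ)).hasSum_iff.mpr ih).mul_left (z * p ^ N)
    have shift_up := ((Equiv.addRight (1 : ℤ)).hasSum_iff.mpr ih).mul_left (p ^ (N + 1) / z)
    rw [thetaPartial_succ hz]
    refine (((ih.mul_left (1 + p ^ (2 * N + 1))).sub shift_down).sub shift_up).congr_fun fun n ↦ ?_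
    have hn : p ^ n ≠ 0 := zpow_ne_zero n hp0
    have hTn : T n = -(z * (p ^ n / p)) * T (n - 1) := by
      simpa only [sub_add_cancel, zpow_sub_one₀ hp0, div_eq_mul_inv] using hT (n - 1)
    simp only [Function.comp_apply, Equiv.subRight_apply, Equiv.coe_addRight]
    rw [centralQBinom_succ_left hp0 hp, hT n, zpow_sub₀ hp0, zpow_add₀ hp0 _ n, zpow_add_one₀ hp0,
      zpow_natCast, hTn]
    field_simp
    ring

lemma summable_norm_mul_pow (hp : ‖p‖ < 1) (z : ℂ) : Summable fun j : ℕ ↦ ‖-(z * p ^ j)‖ := by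
  simp only [norm_neg, norm_mul, norm_pow]
  exact (summable_geometric_of_lt_one (norm_nonneg p) hp).mul_left _

lemma summable_norm_pow_succ_div (hp : ‖p‖ < 1) (z : ℂ) :
    Summable fun j : ℕ ↦ ‖-(p ^ (j + 1) / z)‖ := by
  simpa only [pow_succ', div_mul_eq_mul_div] using summable_norm_mul_pow hp (p / z)

lemma tendsto_qFact (hp : ‖p‖ < 1) :
    Tendsto (qFact p) atTop (𝓝 (∏' i : ℕ, (1 - p ^ (i + 1)))) :=
  (ModularForm.multipliable_one_sub_pow hp).hasProd.tendsto_prod_nat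

lemma tprod_one_sub_ne_zero {f : ℕ → ℂ} (hf : Summable fun j ↦ ‖-f j‖) (hne : ∀ j, 1 - f j ≠ 0) :
    ∏' j, (1 - f j) ≠ 0 := by
  simp only [sub_eq_add_neg] at hne ⊢
  exact tprod_one_add_ne_zero_of_summable hne hf

lemma multipliable_one_sub {f : ℕ → ℂ} (hf : Summable fun j ↦ ‖-f j‖) :
    Multipliable fun j ↦ 1 - f j := by
  simpa only [sub_eq_add_neg] using multipliable_one_add_of_summable hf

lemma tprod_one_sub_pow_succ_ne_zero (hp : ‖p‖ < 1) : ∏' i : ℕ, (1 - p ^ (i + 1)) ≠ 0 :=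
  tprod_one_sub_ne_zero (by simpa using summable_norm_pow_succ_div hp 1)
    (one_sub_pow_succ_ne_zero hp)

lemma tendsto_qFactInv_natCast_add (hp : ‖p‖ < 1) (c : ℤ) :
    Tendsto (fun N : ℕ ↦ qFactInv p (N + c)) atTop (𝓝 (∏' i : ℕ, (1 - p ^ (i + 1)))⁻¹) := by
  have hshift : Tendsto (fun N : ℕ ↦ ((N : ℤ) + c).toNat) atTop atTop :=
    tendsto_atTop_atTop.mpr fun b ↦ ⟨b + c.natAbs, fun a ha ↦ by lia⟩
  have hinv := (tendsto_qFact hp).inv₀ (tprod_one_sub_pow_succ_ne_zero hp)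
  refine (hinv.comp hshift).congr' ?_
  filter_upwards [eventually_ge_atTop c.natAbs] with N hN
  exact (if_neg (by lia)).symm

lemma tendsto_centralQBinom (hp : ‖p‖ < 1) (n : ℤ) :
    Tendsto (fun N ↦ centralQBinom p N n) atTop (𝓝 (∏' i : ℕ, (1 - p ^ (i + 1)))⁻¹) := by
  have hfact := (tendsto_qFact hp).comp (tendsto_id.const_mul_atTop' (show 0 < 2 by norm_num))
  convert (hfact.mul (tendsto_qFactInv_natCast_add hp (-n))).mul
    (tendsto_qFactInv_natCast_add hp n) using 2
  · simp [centralQBinom, sub_eq_add_neg]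
  · rw [mul_inv_cancel₀ (tprod_one_sub_pow_succ_ne_zero hp), one_mul]

lemma exists_norm_centralQBinom_le (hp : ‖p‖ < 1) : ∃ M, ∀ N n, ‖centralQBinom p N n‖ ≤ M := by
  have hlim := tendsto_qFact hp
  obtain ⟨A, hA⟩ := (Metric.isBounded_range_of_tendsto _ hlim).exists_norm_le
  obtain ⟨B, hB⟩ := (Metric.isBounded_range_of_tendsto _
    (hlim.inv₀ (tprod_one_sub_pow_succ_ne_zero hp))).exists_norm_le
  have hA0 : 0 ≤ A := (norm_nonneg _).trans (hA _ ⟨0, rfl⟩)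
  have hB0 : 0 ≤ B := (norm_nonneg _).trans (hB _ ⟨0, rfl⟩)
  have hinv (m : ℤ) : ‖qFactInv p m‖ ≤ B := by
    unfold qFactInv
    split_ifs
    · simpa using hB0
    · exact hB _ ⟨_, rfl⟩
  refine ⟨A * B * B, fun N n ↦ ?_⟩
  have hfact := hA _ ⟨2 * N, rfl⟩
  have hsub := hinv (N - n)
  have hadd := hinv (N + n)
  rw [centralQBinom, norm_mul, norm_mul]
  gcongr

lemma Theta_eq_tprod_mul_tprod_mul_tprod (hp : ‖p‖ < 1) (z : ℂ) :
    Theta p z = (∏' j : ℕ, (1 - z * p ^ j)) * (∏' j : ℕ, (1 - p ^ (j + 1) / z)) *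
      ∏' j : ℕ, (1 - p ^ (j + 1)) := by
  have hleft := multipliable_one_sub (summable_norm_mul_pow hp z)
  have hright := multipliable_one_sub (summable_norm_pow_succ_div hp z)
  rw [← hleft.tprod_mul hright,
    ← (hleft.mul hright).tprod_mul (ModularForm.multipliable_one_sub_pow hp), Theta]

lemma tendsto_thetaPartial_mul_qFact (hp : ‖p‖ < 1) (z : ℂ) :
    Tendsto (fun N ↦ thetaPartial p z N * qFact p N) atTop (𝓝 (Theta p z)) := by
  rw [Theta_eq_tprod_mul_tprod_mul_tprod hp]
  have hleft := multipliable_one_sub (summable_norm_mul_pow hp z)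
  have hright := multipliable_one_sub (summable_norm_pow_succ_div hp z)
  convert ((hleft.hasProd.tendsto_prod_nat.mul hright.hasProd.tendsto_prod_nat).mul
    (tendsto_qFact hp)) using 2
  rw [thetaPartial, prod_mul_distrib]

lemma Theta_ne_zero (hp : ‖p‖ < 1) (hleft : ∀ j : ℕ, 1 - z * p ^ j ≠ 0)
    (hright : ∀ j : ℕ, 1 - p ^ (j + 1) / z ≠ 0) : Theta p z ≠ 0 := by
  rw [Theta_eq_tprod_mul_tprod_mul_tprod hp]
  exact mul_ne_zero (mul_ne_zero
    (tprod_one_sub_ne_zero (summable_norm_mul_pow hp z) hleft)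
    (tprod_one_sub_ne_zero (summable_norm_pow_succ_div hp z) hright))
    (tprod_one_sub_pow_succ_ne_zero hp)

/-- The Jacobi triple product, with `T n = (-z)ⁿ p^{n(n-1)/2}` given by its recursion. -/
theorem Theta_eq_tsum (hp0 : p ≠ 0) (hp : ‖p‖ < 1) (hz : z ≠ 0) {T : ℤ → ℂ} (hT0 : T 0 = 1)
    (hT : ∀ n, T (n + 1) = -(z * p ^ n) * T n) (hsum : Summable T) : Theta p z = ∑' n, T n := by
  obtain ⟨M, hM⟩ := exists_norm_centralQBinom_le hp
  set Q := ∏' i : ℕ, (1 - p ^ (i + 1))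
  have hQ : Q ≠ 0 := tprod_one_sub_pow_succ_ne_zero hp
  have hpartial : Tendsto (thetaPartial p z) atTop (𝓝 (∑' n, T n * Q⁻¹)) := by
    have hdom : Tendsto (fun N ↦ ∑' n, T n * centralQBinom p N n) atTop (𝓝 (∑' n, T n * Q⁻¹)) := by
      refine tendsto_tsum_of_dominated_convergence (hsum.norm.mul_right M)
        (fun n ↦ (tendsto_centralQBinom hp n).const_mul (T n)) (Eventually.of_forall fun N n ↦ ?_)
      rw [norm_mul]
      exact mul_le_mul_of_nonneg_left (hM N n) (norm_nonneg _)
    simpa only [(hasSum_mul_centralQBinom hp0 hp hz hT0 hT _).tsum_eq] using hdom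
  have hTheta := tendsto_nhds_unique (tendsto_thetaPartial_mul_qFact hp z)
    (hpartial.mul (tendsto_qFact hp))
  rw [hTheta, tsum_mul_right, inv_mul_cancel_right₀ hQ]

end TripleProduct

section Bracket

lemma hasSum_int_prod_of_even_of_odd {M : Type*} [AddCommMonoid M] [TopologicalSpace M]
    [ContinuousAdd M] {F : ℤ × ℤ → M} {a b : M}
    (heven : HasSum (fun q : ℤ × ℤ ↦ F (q.1 + q.2, q.1 - q.2)) a)
    (hodd : HasSum (fun q : ℤ × ℤ ↦ F (q.1 + q.2, q.1 - q.2 + 1)) b) : HasSum F (a + b) := by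
  let even (q : ℤ × ℤ) : ℤ × ℤ := (q.1 + q.2, q.1 - q.2)
  let odd (q : ℤ × ℤ) : ℤ × ℤ := (q.1 + q.2, q.1 - q.2 + 1)
  have even_inj : even.Injective := by
    rintro ⟨i, j⟩ ⟨i', j'⟩ h
    simp only [even, Prod.mk.injEq] at h ⊢
    lia
  have odd_inj : odd.Injective := by
    rintro ⟨i, j⟩ ⟨i', j'⟩ h
    simp only [odd, Prod.mk.injEq] at h ⊢
    lia
  refine HasSum.add_isCompl (s := Set.range even) (t := Set.range odd) ?_
    (even_inj.hasSum_range_iff.mpr heven) (odd_inj.hasSum_range_iff.mpr hodd)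
  refine IsCompl.of_eq (Set.disjoint_left.mpr ?_).eq_bot (Set.eq_univ_of_forall ?_)
  · rintro _ ⟨⟨i, j⟩, rfl⟩ ⟨⟨i', j'⟩, h⟩
    simp only [even, odd, Prod.mk.injEq] at h
    lia
  · rintro ⟨a, b⟩
    rcases Int.even_or_odd' (a + b) with ⟨i, h | h⟩
    · exact Or.inl ⟨(i, a - i), by simp only [even, Prod.mk.injEq]; lia⟩
    · exact Or.inr ⟨(i, a - i), by simp only [odd, Prod.mk.injEq]; lia⟩

variable {τ : ℂ} {r : ℝ}

lemma xp_ne_zero (τ : ℂ) (r : ℝ) (s : ℂ) : xp τ r s ≠ 0 := Complex.exp_ne_zero _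

lemma xp_add (τ : ℂ) (r : ℝ) (s t : ℂ) : xp τ r (s + t) = xp τ r s * xp τ r t := by
  rw [xp, xp, xp, ← Complex.exp_add]
  ring_nf

lemma xp_int_mul (τ : ℂ) (r : ℝ) (n : ℤ) (s : ℂ) : xp τ r (n * s) = xp τ r s ^ n := by
  rw [xp, xp, ← Complex.exp_int_mul]
  ring_nf

lemma ne_zero_of_im_pos (hτ : 0 < τ.im) : τ ≠ 0 := by
  rintro rfl
  exact lt_irrefl 0 hτ

lemma im_neg_one_div_pos (hτ : 0 < τ.im) : 0 < (-1 / τ).im := by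
  rw [neg_div, one_div, neg_im, inv_im, neg_div, neg_neg]
  exact div_pos hτ (normSq_pos.mpr (ne_zero_of_im_pos hτ))

lemma norm_xp_two_mul_lt_one (hτ : 0 < τ.im) (hr : r ≠ 0) : ‖xp τ r (2 * r)‖ < 1 := by
  have hτ0 := ne_zero_of_im_pos hτ
  have hr' : (r : ℂ) ≠ 0 := ofReal_ne_zero.mpr hr
  convert UpperHalfPlane.norm_exp_two_pi_I_lt_one ⟨-1 / τ, im_neg_one_div_pos hτ⟩ using 2
  rw [xp, UpperHalfPlane.coe_mk]
  congr 1
  field_simp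

/-- The terms of the theta series of the bracket, with the Gaussian prefactor `x^{u²/r - u}`
absorbed by completing the square. -/
def brTerm (τ : ℂ) (r : ℝ) (u : ℂ) (n : ℤ) : ℂ :=
  (-1) ^ n * xp τ r ((u + r * (n - 1 / 2)) ^ 2 / r - r / 4)

lemma brTerm_eq_mul_jacobiTheta₂_term (hτ : 0 < τ.im) (hr : r ≠ 0) (u : ℂ) (n : ℤ) :
    brTerm τ r u n = xp τ r (u ^ 2 / r - u) *
      jacobiTheta₂_term n (-u / (r * τ) + 1 / (2 * τ) + 1 / 2) (-1 / τ) := by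
  have hτ0 := ne_zero_of_im_pos hτ
  have hr' : (r : ℂ) ≠ 0 := ofReal_ne_zero.mpr hr
  have hsign : ((-1) ^ n : ℂ) = cexp (n * (Real.pi * I)) := by
    rw [Complex.exp_int_mul, exp_pi_mul_I]
  rw [brTerm, xp, xp, jacobiTheta₂_term, hsign, ← Complex.exp_add, ← Complex.exp_add]
  congr 1
  field_simp
  ring

lemma summable_brTerm (hτ : 0 < τ.im) (hr : r ≠ 0) (u : ℂ) : Summable (brTerm τ r u) := by
  simp only [funext (brTerm_eq_mul_jacobiTheta₂_term hτ hr u)]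
  exact ((summable_jacobiTheta₂_term_iff _ _).mpr (im_neg_one_div_pos hτ)).mul_left _

lemma br_eq_tsum_brTerm (hτ : 0 < τ.im) (hr : r ≠ 0) (u : ℂ) :
    br τ r u = ∑' n, brTerm τ r u n := by
  have hr' : (r : ℂ) ≠ 0 := ofReal_ne_zero.mpr hr
  let T (n : ℤ) : ℂ := (-1) ^ n * xp τ r (2 * u * n + r * (n ^ 2 - n))
  have hterm (n : ℤ) : brTerm τ r u n = xp τ r (u ^ 2 / r - u) * T n := by
    rw [brTerm, mul_left_comm, ← xp_add]
    congr 2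
    field_simp
    ring
  have hT (n : ℤ) : T (n + 1) = -(xp τ r (2 * u) * xp τ r (2 * r) ^ n) * T n := by
    simp only [T, ← xp_int_mul, ← xp_add]
    rw [neg_mul, mul_left_comm, ← xp_add, zpow_add_one₀ (by norm_num), mul_neg_one, neg_mul]
    congr 3
    push_cast
    ring
  have hsum : Summable T := by
    rw [← summable_mul_left_iff (xp_ne_zero τ r (u ^ 2 / r - u)), ← funext hterm]
    exact summable_brTerm hτ hr u
  simp only [br, hterm, tsum_mul_left]
  rw [Theta_eq_tsum (xp_ne_zero _ _ _) (norm_xp_two_mul_lt_one hτ hr) (xp_ne_zero _ _ _)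
    (by simp [T, xp]) hT hsum]

lemma br_eq_mul_jacobiTheta₂ (hτ : 0 < τ.im) (hr : r ≠ 0) (u : ℂ) :
    br τ r u = xp τ r (u ^ 2 / r - u) *
      jacobiTheta₂ (-u / (r * τ) + 1 / (2 * τ) + 1 / 2) (-1 / τ) := by
  rw [br_eq_tsum_brTerm hτ hr, jacobiTheta₂, ← tsum_mul_left]
  exact tsum_congr (brTerm_eq_mul_jacobiTheta₂_term hτ hr u)

lemma differentiable_br (hτ : 0 < τ.im) (hr : r ≠ 0) : Differentiable ℂ (br τ r) := by
  have htheta : Differentiable ℂ fun v ↦ jacobiTheta₂ v (-1 / τ) :=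
    fun v ↦ differentiableAt_jacobiTheta₂_fst v (im_neg_one_div_pos hτ)
  rw [funext (br_eq_mul_jacobiTheta₂ hτ hr)]
  unfold xp
  refine Differentiable.mul (by fun_prop) (htheta.comp ?_)
  fun_prop

lemma br_neg (hτ : 0 < τ.im) (hr : r ≠ 0) (u : ℂ) : br τ r (-u) = -br τ r u := by
  rw [br_eq_tsum_brTerm hτ hr, br_eq_tsum_brTerm hτ hr, ← tsum_neg,
    ← (Equiv.subLeft (1 : ℤ)).tsum_eq]
  refine tsum_congr fun n ↦ ?_
  have hsign : ((-1) ^ (1 - n) : ℂ) = -(-1) ^ n := by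
    rw [zpow_sub₀ (by norm_num), zpow_one, neg_div, one_div, ← inv_zpow, inv_neg_one]
  rw [Equiv.subLeft_apply, brTerm, brTerm, hsign, neg_mul]
  push_cast
  ring_nf

lemma br_zero (hτ : 0 < τ.im) (hr : r ≠ 0) : br τ r 0 = 0 := by
  have h := br_neg hτ hr 0
  rwa [neg_zero, self_eq_neg] at h

/-- The theta series `∑ᵢ x^{2(u + r(i + c))²/r - r/4}` of doubled quadratic exponent. The products
`[u + v][u - v]` are bilinear in the cases `c = -1/2` and `c = 0`. -/
def doubledTheta (τ : ℂ) (r : ℝ) (c u : ℂ) : ℂ :=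
  ∑' i : ℤ, xp τ r (2 * (u + r * (i + c)) ^ 2 / r - r / 4)

lemma summable_doubledTheta (hτ : 0 < τ.im) (hr : r ≠ 0) (c u : ℂ) :
    Summable fun i : ℤ ↦ xp τ r (2 * (u + r * (i + c)) ^ 2 / r - r / 4) := by
  have hτ0 := ne_zero_of_im_pos hτ
  have hr' : (r : ℂ) ≠ 0 := ofReal_ne_zero.mpr hr
  have hterm (i : ℤ) : xp τ r (2 * (u + r * (i + c)) ^ 2 / r - r / 4) =
      xp τ r (2 * (u + r * c) ^ 2 / r - r / 4) *
        jacobiTheta₂_term i (-2 * (u + r * c) / (r * τ)) (2 * (-1 / τ)) := by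
    rw [xp, xp, jacobiTheta₂_term, ← Complex.exp_add]
    congr 1
    field_simp
    ring
  simp only [hterm]
  refine ((summable_jacobiTheta₂_term_iff _ _).mpr ?_).mul_left _
  rw [← ofReal_ofNat, im_ofReal_mul]
  exact mul_pos two_pos (im_neg_one_div_pos hτ)

lemma br_add_mul_br_sub (hτ : 0 < τ.im) (hr : r ≠ 0) (u v : ℂ) :
    br τ r (u + v) * br τ r (u - v) =
      doubledTheta τ r (-1 / 2) u * doubledTheta τ r 0 v -
        doubledTheta τ r 0 u * doubledTheta τ r (-1 / 2) v := by
  have hr' : (r : ℂ) ≠ 0 := ofReal_ne_zero.mpr hr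
  have hprod (c d : ℂ) := (summable_mul_of_summable_norm (summable_doubledTheta hτ hr c u).norm
    (summable_doubledTheta hτ hr d v).norm).hasSum
  simp only [br_eq_tsum_brTerm hτ hr, doubledTheta]
  rw [tsum_mul_tsum_of_summable_norm (summable_brTerm hτ hr _).norm (summable_brTerm hτ hr _).norm,
    tsum_mul_tsum_of_summable_norm (summable_doubledTheta hτ hr _ u).norm
      (summable_doubledTheta hτ hr _ v).norm,
    tsum_mul_tsum_of_summable_norm (summable_doubledTheta hτ hr _ u).norm
      (summable_doubledTheta hτ hr _ v).norm, sub_eq_add_neg]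
  refine (hasSum_int_prod_of_even_of_odd ((hprod (-1 / 2) 0).congr_fun ?_)
    ((hprod 0 (-1 / 2)).neg.congr_fun ?_)).tsum_eq
  · rintro ⟨i, j⟩
    have hsign : ((-1) ^ (i + j) * (-1) ^ (i - j) : ℂ) = 1 := by
      rw [← zpow_add₀ (by norm_num), show i + j + (i - j) = 2 * i by ring, zpow_mul]
      norm_num
    rw [brTerm, brTerm, mul_mul_mul_comm, hsign, one_mul, ← xp_add, ← xp_add]
    congr 1
    push_cast
    field_simp
    ring
  · rintro ⟨i, j⟩
    have hsign : ((-1) ^ (i + j) * (-1) ^ (i - j + 1) : ℂ) = -1 := by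
      rw [← zpow_add₀ (by norm_num), show i + j + (i - j + 1) = 2 * i + 1 by ring,
        zpow_add_one₀ (by norm_num), zpow_mul]
      norm_num
    rw [brTerm, brTerm, mul_mul_mul_comm, hsign, neg_one_mul, ← xp_add, ← xp_add]
    congr 2
    push_cast
    field_simp
    ring

theorem br_three_term (hτ : 0 < τ.im) (hr : r ≠ 0) (a b c z : ℂ) :
    br τ r (a + z) * br τ r (a - z) * (br τ r (b + c) * br τ r (b - c)) =
      br τ r (a + c) * br τ r (a - c) * (br τ r (b + z) * br τ r (b - z)) -
        br τ r (a + b) * br τ r (a - b) * (br τ r (c + z) * br τ r (c - z)) := by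
  simp only [br_add_mul_br_sub hτ hr]
  ring

lemma one_add_pow_ne_zero {p : ℂ} (hp : ‖p‖ < 1) (j : ℕ) : 1 + p ^ j ≠ 0 := by
  rcases j.eq_zero_or_pos with rfl | hj
  · norm_num
  · intro h
    have hdouble : 1 - p ^ (2 * j - 1 + 1) = 0 := by
      rw [show 2 * j - 1 + 1 = j + j by lia, pow_add]
      linear_combination (1 - p ^ j) * h
    exact one_sub_pow_succ_ne_zero hp _ hdouble

lemma br_half_period_ne_zero (hτ : 0 < τ.im) (hr : r ≠ 0) : br τ r (r * τ / 2) ≠ 0 := by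
  have hτ0 := ne_zero_of_im_pos hτ
  have hr' : (r : ℂ) ≠ 0 := ofReal_ne_zero.mpr hr
  have hz : xp τ r (2 * (r * τ / 2)) = -1 := by
    rw [xp, ← exp_neg_pi_mul_I]
    congr 1
    field_simp
  have hp := norm_xp_two_mul_lt_one hτ hr
  rw [br, hz]
  refine mul_ne_zero (xp_ne_zero _ _ _) (Theta_ne_zero hp (fun j ↦ ?_) fun j ↦ ?_)
  · simpa using one_add_pow_ne_zero hp j
  · simpa [div_neg] using one_add_pow_ne_zero hp (j + 1)

lemma eventually_br_add_mul_ne_zero (hτ : 0 < τ.im) (hr : r ≠ 0) (c : ℂ) {s : ℂ} (hs : s ≠ 0) :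
    ∀ᶠ t in 𝓝[≠] (0 : ℂ), br τ r (c + s * t) ≠ 0 := by
  have hdiff : Differentiable ℂ fun t ↦ br τ r (c + s * t) :=
    (differentiable_br hτ hr).comp (by fun_prop)
  have hanalytic : AnalyticOnNhd ℂ (fun t ↦ br τ r (c + s * t)) Set.univ :=
    fun t _ ↦ hdiff.analyticAt t
  refine ((hdiff.analyticAt 0).eventually_eq_zero_or_eventually_ne_zero).resolve_left fun hzero ↦ ?_
  have hhalf := hanalytic.eqOn_zero_of_preconnected_of_eventuallyEq_zero isPreconnected_univ
    (Set.mem_univ 0) hzero (Set.mem_univ ((r * τ / 2 - c) / s))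
  refine br_half_period_ne_zero hτ hr ?_
  simpa [mul_div_cancel₀ _ hs] using hhalf

end Bracket

section ShiftedFactorial

variable {τ : ℂ} {r : ℝ}

lemma brF_zero (τ : ℂ) (r : ℝ) (u : ℂ) : brF τ r u 0 = 1 := prod_range_zero _

lemma brF_add (τ : ℂ) (r : ℝ) (u : ℂ) (n d : ℕ) :
    brF τ r u (n + d) = brF τ r u n * brF τ r (u + n) d := by
  simp only [brF, prod_range_add, Nat.cast_add, add_assoc]

lemma brF_succ (τ : ℂ) (r : ℝ) (u : ℂ) (n : ℕ) :
    brF τ r u (n + 1) = brF τ r u n * br τ r (u + n) :=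
  prod_range_succ _ _

lemma brF_succ' (τ : ℂ) (r : ℝ) (u : ℂ) (n : ℕ) :
    brF τ r u (n + 1) = br τ r u * brF τ r (u + 1) n := by
  rw [add_comm, brF_add]
  simp [brF]

lemma inv_brF {u : ℂ} {n : ℕ} (h : br τ r (u + n) ≠ 0) :
    (brF τ r u n)⁻¹ = br τ r (u + n) * (br τ r u * brF τ r (u + 1) n)⁻¹ := by
  rw [← brF_succ', brF_succ, mul_inv_rev, mul_inv_cancel_left₀ h]

lemma brF_ne_zero_iff {u : ℂ} {n : ℕ} :
    brF τ r u n ≠ 0 ↔ ∀ i < n, br τ r (u + i) ≠ 0 := by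
  simp only [brF, prod_ne_zero_iff, mem_range]

/-- The product `[a ± z]_k = [a + z]_k [a - z]_k`, an even function of `z`. -/
def brPM (τ : ℂ) (r : ℝ) (z a : ℂ) (k : ℕ) : ℂ := brF τ r (a + z) k * brF τ r (a - z) k

lemma brPM_zero (τ : ℂ) (r : ℝ) (z a : ℂ) : brPM τ r z a 0 = 1 := by
  rw [brPM, brF_zero, brF_zero, mul_one]

lemma brPM_succ (τ : ℂ) (r : ℝ) (z a : ℂ) (k : ℕ) :
    brPM τ r z a (k + 1) = brPM τ r z a k * (br τ r (a + k + z) * br τ r (a + k - z)) := by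
  rw [brPM, brPM, brF_succ, brF_succ]
  ring_nf

lemma brPM_add (τ : ℂ) (r : ℝ) (z a : ℂ) (n d : ℕ) :
    brPM τ r z a (n + d) = brPM τ r z a n * brPM τ r z (a + n) d := by
  rw [brPM, brPM, brPM, brF_add, brF_add]
  ring_nf

end ShiftedFactorial

section BinomialTheorem

variable {τ : ℂ} {r : ℝ}

/-- The coefficient of `[b ± z]` when `[a ± z]` is written as a linear combination of `[b ± z]` and
`[c ± z]`. -/
def interpCoeff (τ : ℂ) (r : ℝ) (a b c : ℂ) : ℂ :=
  br τ r (a + c) * br τ r (a - c) / (br τ r (b + c) * br τ r (b - c))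

lemma br_add_mul_br_sub_eq_interpolation (hτ : 0 < τ.im) (hr : r ≠ 0) {a b c : ℂ}
    (hadd : br τ r (b + c) ≠ 0) (hsub : br τ r (b - c) ≠ 0) (z : ℂ) :
    br τ r (a + z) * br τ r (a - z) =
      interpCoeff τ r a b c * (br τ r (b + z) * br τ r (b - z)) +
        interpCoeff τ r a c b * (br τ r (c + z) * br τ r (c - z)) := by
  rw [interpCoeff, interpCoeff, add_comm c b, ← neg_sub b c, br_neg hτ hr]
  field_simp
  linear_combination br_three_term hτ hr a b c z

/-- The coefficient `C_n^{n+d}(α,β,γ)`, indexed by `n` and `d` instead of `n` and `k = n + d` to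
make it symmetric under the exchange of `(β, n)` and `(γ, d)`. -/
def ellBinom (τ : ℂ) (r : ℝ) (α β γ : ℂ) (n d : ℕ) : ℂ :=
  brF τ r 1 (n + d) / (brF τ r 1 n * brF τ r 1 d) *
    (brF τ r (α - γ) n * brF τ r (α + γ + d) n * brF τ r (α - β) d * brF τ r (α + β + n) d) /
    (brF τ r (β - γ - d) n * brF τ r (γ - β - n) d * brF τ r (β + γ) (n + d))

lemma Cnk_add_eq_ellBinom (τ : ℂ) (r : ℝ) (α β γ : ℂ) (n d : ℕ) :
    Cnk τ r (n + d) n α β γ = ellBinom τ r α β γ n d := by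
  rw [Cnk, ellBinom, Nat.add_sub_cancel_left]
  push_cast
  ring_nf

lemma ellBinom_symm (τ : ℂ) (r : ℝ) (α β γ : ℂ) (n d : ℕ) :
    ellBinom τ r α β γ n d = ellBinom τ r α γ β d n := by
  rw [ellBinom, ellBinom, add_comm d n, add_comm γ β]
  ring

/-- The common factor of the three coefficients in the Pascal recursion
`ellBinom_succ_succ`. -/
def ellBinomCore (τ : ℂ) (r : ℝ) (α β γ : ℂ) (n d : ℕ) : ℂ :=
  brF τ r 1 (n + d + 1) / (brF τ r 1 n * brF τ r 1 d) *
    (brF τ r (α - γ) n * brF τ r (α + γ + d + 1) n *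
      brF τ r (α - β) d * brF τ r (α + β + n + 1) d) /
    (brF τ r (β - γ - d) n * brF τ r (γ - β - n) d * brF τ r (β + γ) (n + d + 1))

lemma ellBinomCore_symm (τ : ℂ) (r : ℝ) (α β γ : ℂ) (n d : ℕ) :
    ellBinomCore τ r α β γ n d = ellBinomCore τ r α γ β d n := by
  rw [ellBinomCore, ellBinomCore, add_comm d n, add_comm γ β]
  ring

lemma ellBinom_right_succ_eq_core {α β γ : ℂ} {n d : ℕ} (h : br τ r (β - γ + n - d - 1) ≠ 0) :
    ellBinom τ r α β γ n (d + 1) = ellBinomCore τ r α β γ n d *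
      (br τ r (α - β + d) * br τ r (α + β + n) * br τ r (β - γ + n - d - 1) /
        (br τ r (1 + d) * br τ r (β - γ - d - 1) * br τ r (γ - β - n + d))) := by
  have hshift : br τ r (β - γ - d - 1 + n) ≠ 0 := by convert h using 2; ring
  rw [ellBinom, ellBinomCore, brF_succ _ _ 1 d, brF_succ _ _ (α - β), brF_succ' _ _ (α + β + n),
    brF_succ _ _ (γ - β - n)]
  push_cast
  rw [← sub_sub _ (d : ℂ) 1]
  simp only [div_eq_mul_inv, mul_inv, inv_brF hshift]
  ring_nf

lemma interpCoeff_mul_ellBinom_right_succ (α : ℂ) {β γ : ℂ} {n d : ℕ}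
    (h : br τ r (β - γ + n - d - 1) ≠ 0) :
    interpCoeff τ r (α + (n + d + 1)) (β + n) (γ + (d + 1)) * ellBinom τ r α β γ n (d + 1) =
      ellBinomCore τ r α β γ n d *
        (br τ r (α - γ + n) * br τ r (α - β + d) *
          (br τ r (α + γ + n + 2 * d + 2) * br τ r (α + β + n)) /
          (br τ r (β + γ + n + d + 1) * br τ r (1 + d) *
            (br τ r (β - γ - d - 1) * br τ r (γ - β - n + d)))) := by
  have hcoeff : interpCoeff τ r (α + (n + d + 1)) (β + n) (γ + (d + 1)) =
      br τ r (α + γ + n + 2 * d + 2) * br τ r (α - γ + n) /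
        (br τ r (β + γ + n + d + 1) * br τ r (β - γ + n - d - 1)) := by
    rw [interpCoeff]
    ring_nf
  rw [hcoeff, ellBinom_right_succ_eq_core h]
  field_simp

lemma interpCoeff_mul_ellBinom_left_succ (α : ℂ) {β γ : ℂ} {n d : ℕ}
    (h : br τ r (γ - β + d - n - 1) ≠ 0) :
    interpCoeff τ r (α + (n + d + 1)) (γ + d) (β + (n + 1)) * ellBinom τ r α β γ (n + 1) d =
      ellBinomCore τ r α β γ n d *
        (br τ r (α - γ + n) * br τ r (α - β + d) *
          (br τ r (α + β + 2 * n + d + 2) * br τ r (α + γ + d)) /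
          (br τ r (β + γ + n + d + 1) * br τ r (1 + n) *
            (br τ r (γ - β - n - 1) * br τ r (β - γ + n - d)))) := by
  rw [ellBinom_symm, ellBinomCore_symm, add_comm (n : ℂ) d, interpCoeff_mul_ellBinom_right_succ α h]
  ring_nf

lemma ellBinom_succ_succ_eq_core (τ : ℂ) (r : ℝ) (α β γ : ℂ) (n d : ℕ) :
    ellBinom τ r α β γ (n + 1) (d + 1) = ellBinomCore τ r α β γ n d *
      (br τ r (2 + n + d) * br τ r (α - γ + n) * br τ r (α + γ + n + d + 1) *
        br τ r (α - β + d) * br τ r (α + β + n + d + 1) /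
        (br τ r (1 + n) * br τ r (1 + d) * br τ r (β + γ + n + d + 1) *
          br τ r (β - γ - d - 1) * br τ r (γ - β - n - 1))) := by
  rw [ellBinom, ellBinomCore, ← add_assoc, add_right_comm n 1 d, brF_succ _ _ 1 (n + d + 1),
    brF_succ _ _ 1 n, brF_succ _ _ 1 d, brF_succ _ _ (α - γ), brF_succ _ _ (α - β),
    brF_succ _ _ (α + γ + _), brF_succ _ _ (α + β + _), brF_succ' _ _ (β - γ - _),
    brF_succ' _ _ (γ - β - _), brF_succ _ _ (β + γ) (n + d + 1)]
  push_cast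
  simp only [div_eq_mul_inv, mul_inv]
  ring_nf

lemma br_pascal_identity (hτ : 0 < τ.im) (hr : r ≠ 0) (α β γ n d : ℂ) :
    br τ r (β - γ + n - d) * br τ r (2 + n + d) *
        (br τ r (α + γ + n + d + 1) * br τ r (α + β + n + d + 1)) =
      br τ r (α + γ + n + 2 * d + 2) * br τ r (α + β + n) *
          (br τ r (1 + n) * br τ r (β - γ + n + 1)) +
        br τ r (α + β + 2 * n + d + 2) * br τ r (α + γ + d) *
          (br τ r (1 + d) * br τ r (β - γ - d - 1)) := by
  have hneg : br τ r (γ - β + d + 1) = -br τ r (β - γ - d - 1) := by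
    rw [← br_neg hτ hr]
    ring_nf
  have h := br_three_term hτ hr (α + (β + γ) / 2 + n + d + 1) ((β - γ) / 2 + n + 1)
    ((γ - β) / 2 + d + 1) ((γ - β) / 2)
  ring_nf at h hneg ⊢
  rw [hneg] at h
  linear_combination h

/-- Nonvanishing of the brackets that can occur in a denominator of a coefficient `C_n^l(·,β,γ)`
with `n ≤ l ≤ k`. -/
structure BinomRegular (τ : ℂ) (r : ℝ) (k : ℕ) (β γ : ℂ) : Prop where
  br_sub_ne_zero : ∀ i : ℤ, -k < i → i < k → br τ r (β - γ + i) ≠ 0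
  br_add_ne_zero : ∀ i : ℕ, i < k → br τ r (β + γ + i) ≠ 0
  br_one_add_ne_zero : ∀ i : ℕ, i < k → br τ r (1 + i) ≠ 0

lemma BinomRegular.mono {k l : ℕ} {β γ : ℂ} (h : BinomRegular τ r k β γ) (hl : l ≤ k) :
    BinomRegular τ r l β γ where
  br_sub_ne_zero i hlo hhi := h.br_sub_ne_zero i (by lia) (by lia)
  br_add_ne_zero i hi := h.br_add_ne_zero i (by lia)
  br_one_add_ne_zero i hi := h.br_one_add_ne_zero i (by lia)

lemma BinomRegular.symm (hτ : 0 < τ.im) (hr : r ≠ 0) {k : ℕ} {β γ : ℂ}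
    (h : BinomRegular τ r k β γ) : BinomRegular τ r k γ β where
  br_sub_ne_zero i hlo hhi := by
    have hneg := h.br_sub_ne_zero (-i) (by lia) (by lia)
    rw [show γ - β + (i : ℂ) = -(β - γ + (-i : ℤ)) by push_cast; ring, br_neg hτ hr]
    exact neg_ne_zero.mpr hneg
  br_add_ne_zero i hi := by
    rw [add_comm γ β]
    exact h.br_add_ne_zero i hi
  br_one_add_ne_zero := h.br_one_add_ne_zero

lemma BinomRegular.add_natCast_left {k j : ℕ} {β γ : ℂ} (h : BinomRegular τ r k β γ) :
    BinomRegular τ r (k - j) (β + j) γ where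
  br_sub_ne_zero i hlo hhi := by
    convert h.br_sub_ne_zero (j + i) (by lia) (by lia) using 2
    push_cast
    ring
  br_add_ne_zero i hi := by
    convert h.br_add_ne_zero (j + i) (by lia) using 2
    push_cast
    ring
  br_one_add_ne_zero i hi := h.br_one_add_ne_zero i (by lia)

lemma ellBinom_succ_succ (hτ : 0 < τ.im) (hr : r ≠ 0) (α : ℂ) {β γ : ℂ} {n d : ℕ}
    (h : BinomRegular τ r (n + d + 2) β γ) :
    ellBinom τ r α β γ (n + 1) (d + 1) =
      interpCoeff τ r (α + (n + d + 1)) (β + n) (γ + (d + 1)) * ellBinom τ r α β γ n (d + 1) +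
        interpCoeff τ r (α + (n + d + 1)) (γ + d) (β + (n + 1)) *
          ellBinom τ r α β γ (n + 1) d := by
  have hflip (u : ℂ) : br τ r (γ - β - u) = -br τ r (β - γ + u) := by
    rw [← br_neg hτ hr]
    ring_nf
  have hsub {u : ℂ} (i : ℤ) (hu : u = β - γ + i) (hlo : -(n + d + 2) < i) (hhi : i < n + d + 2) :
      br τ r u ≠ 0 := hu ▸ h.br_sub_ne_zero i (by lia) (by lia)
  have hleft_ne : br τ r (β - γ + n - d - 1) ≠ 0 :=
    hsub (n - d - 1) (by push_cast; ring) (by lia) (by lia)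
  have hright_ne : br τ r (γ - β + d - n - 1) ≠ 0 := by
    rw [show γ - β + d - n - 1 = γ - β - (n - d + 1) by ring, hflip]
    exact neg_ne_zero.mpr (hsub (n - d + 1) (by push_cast; ring) (by lia) (by lia))
  have hdiag_ne : br τ r (β - γ + n - d) ≠ 0 := hsub (n - d) (by push_cast; ring) (by lia) (by lia)
  have hd_ne : br τ r (β - γ - d - 1) ≠ 0 := hsub (-d - 1) (by push_cast; ring) (by lia) (by lia)
  have hn_ne : br τ r (β - γ + n + 1) ≠ 0 := hsub (n + 1) (by push_cast; ring) (by lia) (by lia)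
  have hadd_ne : br τ r (β + γ + n + d + 1) ≠ 0 := by
    have := h.br_add_ne_zero (n + d + 1) (by lia)
    push_cast at this
    rwa [← add_assoc, ← add_assoc] at this
  have hone_n := h.br_one_add_ne_zero n (by lia)
  have hone_d := h.br_one_add_ne_zero d (by lia)
  rw [ellBinom_succ_succ_eq_core, interpCoeff_mul_ellBinom_right_succ α hleft_ne,
    interpCoeff_mul_ellBinom_left_succ α hright_ne,
    show γ - β - n + d = γ - β - (n - d) by ring, show γ - β - n - 1 = γ - β - (n + 1) by ring,
    hflip, hflip, ← add_sub_assoc, ← add_assoc]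
  field_simp
  linear_combination -ellBinomCore τ r α β γ n d * br τ r (α - γ + n) * br τ r (α - β + d) *
    br_pascal_identity hτ hr α β γ n d

lemma ellBinom_zero_zero (τ : ℂ) (r : ℝ) (α β γ : ℂ) : ellBinom τ r α β γ 0 0 = 1 := by
  simp [ellBinom, brF_zero]

lemma ellBinom_zero_succ (α β γ : ℂ) {d : ℕ} (hone : brF τ r 1 (d + 1) ≠ 0) :
    ellBinom τ r α β γ 0 (d + 1) =
      interpCoeff τ r (α + d) (γ + d) β * ellBinom τ r α β γ 0 d := by
  have hone' : brF τ r 1 d ≠ 0 := left_ne_zero_of_mul (brF_succ τ r 1 d ▸ hone)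
  simp only [ellBinom, interpCoeff, brF_zero, zero_add, Nat.cast_zero, sub_zero, add_zero, one_mul,
    mul_one, div_self hone, div_self hone', brF_succ τ r (α - β), brF_succ τ r (α + β),
    brF_succ τ r (γ - β), brF_succ τ r (β + γ), div_eq_mul_inv, mul_inv]
  ring_nf

lemma ellBinom_succ_zero (α β γ : ℂ) {n : ℕ} (hone : brF τ r 1 (n + 1) ≠ 0) :
    ellBinom τ r α β γ (n + 1) 0 =
      interpCoeff τ r (α + n) (β + n) γ * ellBinom τ r α β γ n 0 := by
  rw [ellBinom_symm, ellBinom_zero_succ α γ β hone, ellBinom_symm]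

lemma sum_antidiagonal_succ_of_pascal {R : Type*} [NonUnitalNonAssocSemiring R] {k : ℕ}
    {F A B : ℕ → ℕ → R}
    (hleft : F 0 (k + 1) = B 0 k) (hright : F (k + 1) 0 = A k 0)
    (hmid : ∀ n d, n + d + 1 = k → F (n + 1) (d + 1) = A n (d + 1) + B (n + 1) d)
    (W : ℕ → ℕ → R) :
    ∑ q ∈ antidiagonal (k + 1), F q.1 q.2 * W q.1 q.2 =
      ∑ q ∈ antidiagonal k, (A q.1 q.2 * W (q.1 + 1) q.2 + B q.1 q.2 * W q.1 (q.2 + 1)) := by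
  rw [sum_add_distrib]
  cases k with
  | zero => simp [Nat.sum_antidiagonal_succ, hleft, hright, add_comm]
  | succ k =>
    have hsum : ∑ q ∈ antidiagonal k, F (q.1 + 1) (q.2 + 1) * W (q.1 + 1) (q.2 + 1) =
        ∑ q ∈ antidiagonal k, A q.1 (q.2 + 1) * W (q.1 + 1) (q.2 + 1) +
          ∑ q ∈ antidiagonal k, B (q.1 + 1) q.2 * W (q.1 + 1) (q.2 + 1) := by
      rw [← sum_add_distrib]
      refine sum_congr rfl fun q hq ↦ ?_
      rw [hmid _ _ (by rw [mem_antidiagonal.mp hq]), add_mul]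
    rw [Nat.sum_antidiagonal_succ, Nat.sum_antidiagonal_succ', Nat.sum_antidiagonal_succ' (n := k),
      Nat.sum_antidiagonal_succ (n := k), hsum, hleft, hright]
    abel

theorem brPM_eq_sum_antidiagonal_ellBinom (hτ : 0 < τ.im) (hr : r ≠ 0) (α z : ℂ) {β γ : ℂ} {k : ℕ}
    (h : BinomRegular τ r k β γ) :
    brPM τ r z α k = ∑ q ∈ antidiagonal k,
      ellBinom τ r α β γ q.1 q.2 * (brPM τ r z β q.1 * brPM τ r z γ q.2) := by
  induction k with
  | zero => simp [ellBinom_zero_zero, brPM_zero]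
  | succ k ih =>
    rw [sum_antidiagonal_succ_of_pascal
      (A := fun n d ↦ interpCoeff τ r (α + k) (β + n) (γ + d) * ellBinom τ r α β γ n d)
      (B := fun n d ↦ interpCoeff τ r (α + k) (γ + d) (β + n) * ellBinom τ r α β γ n d)
      (W := fun n d ↦ brPM τ r z β n * brPM τ r z γ d),
      brPM_succ, ih (h.mono k.le_succ), sum_mul]
    · refine sum_congr rfl fun ⟨n, d⟩ hq ↦ ?_
      obtain rfl : n + d = k := mem_antidiagonal.mp hq
      have hadd : br τ r (β + n + (γ + d)) ≠ 0 := by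
        convert h.br_add_ne_zero (n + d) (by lia) using 2
        push_cast
        ring
      have hsub : br τ r (β + n - (γ + d)) ≠ 0 := by
        convert h.br_sub_ne_zero (n - d) (by lia) (by lia) using 2
        push_cast
        ring
      rw [br_add_mul_br_sub_eq_interpolation hτ hr hadd hsub, brPM_succ, brPM_succ]
      ring
    · simpa using ellBinom_zero_succ α β γ (brF_ne_zero_iff.mpr h.br_one_add_ne_zero)
    · simpa using ellBinom_succ_zero α β γ (brF_ne_zero_iff.mpr h.br_one_add_ne_zero)
    · rintro n d rfl
      convert ellBinom_succ_succ hτ hr α h using 3 <;> push_cast <;> rfl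

theorem brPM_eq_sum_Cnk (hτ : 0 < τ.im) (hr : r ≠ 0) (α z : ℂ) {β γ : ℂ} {k : ℕ}
    (h : BinomRegular τ r k β γ) :
    brPM τ r z α k = ∑ n ∈ range (k + 1),
      Cnk τ r k n α β γ * (brPM τ r z β n * brPM τ r z γ (k - n)) := by
  rw [brPM_eq_sum_antidiagonal_ellBinom hτ hr α z h, Nat.sum_antidiagonal_eq_sum_range_succ_mk]
  refine sum_congr rfl fun n hn ↦ ?_
  rw [← Cnk_add_eq_ellBinom, Nat.add_sub_cancel' (mem_range_succ_iff.mp hn)]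

end BinomialTheorem

section Expansion

variable {τ : ℂ} {r : ℝ}

lemma BinomRegular.add_sub_right (hτ : 0 < τ.im) (hr : r ≠ 0) {k l : ℕ} {γ σ : ℂ}
    (h : BinomRegular τ r k γ σ) (hl : l ≤ k) : BinomRegular τ r l γ (σ + k - l) := by
  have hshift := (((h.symm hτ hr).add_natCast_left (j := k - l)).symm hτ hr)
  rwa [Nat.sub_sub_self hl, Nat.cast_sub hl, ← add_sub_assoc] at hshift

lemma sum_range_sum_range_sub {M : Type*} [AddCommMonoid M] {n k : ℕ} (hn : n ≤ k)
    (f : ℕ → ℕ → M) :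
    ∑ j ∈ range (n + 1), ∑ i ∈ range (k - j + 1), f j (j + i) =
      ∑ m ∈ range (k + 1), ∑ j ∈ range (min n m + 1), f j m := by
  have hIco : ∀ j ∈ range (n + 1),
      ∑ i ∈ range (k - j + 1), f j (j + i) = ∑ m ∈ Ico j (k + 1), f j m := by
    intro j hj
    rw [sum_Ico_eq_sum_range, Nat.sub_add_comm ((mem_range_succ_iff.mp hj).trans hn)]
  rw [sum_congr rfl hIco]
  refine sum_comm' fun j m ↦ ?_
  simp only [mem_range, mem_Ico]
  lia

theorem brPM_mul_brPM_eq_sum_Rnm (hτ : 0 < τ.im) (hr : r ≠ 0) (α z : ℂ) {β γ δ : ℂ} {k n : ℕ}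
    (hn : n ≤ k) (hγβ : BinomRegular τ r n γ (β + k - n)) (hγδ : BinomRegular τ r k γ δ) :
    brPM τ r z α n * brPM τ r z β (k - n) =
      ∑ m ∈ range (k + 1), Rnm τ r k n m α β γ δ * (brPM τ r z γ m * brPM τ r z δ (k - m)) := by
  have hterm : ∀ j ∈ range (n + 1),
      Cnk τ r n j α γ (β + k - n) * (brPM τ r z γ j * brPM τ r z (β + k - n) (n - j)) *
        brPM τ r z β (k - n) =
      ∑ i ∈ range (k - j + 1), Cnk τ r n j α γ (β + k - n) *
        Cnk τ r (k - j) (j + i - j) β (γ + j) δ *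
          (brPM τ r z γ (j + i) * brPM τ r z δ (k - (j + i))) := by
    intro j hj
    have hβ : brPM τ r z β (k - n) * brPM τ r z (β + k - n) (n - j) = brPM τ r z β (k - j) := by
      rw [← Nat.sub_add_sub_cancel hn (mem_range_succ_iff.mp hj), brPM_add, Nat.cast_sub hn,
        add_sub_assoc]
    rw [mul_assoc, mul_assoc, mul_comm (brPM _ _ _ (β + k - n) _), hβ,
      brPM_eq_sum_Cnk hτ hr β z hγδ.add_natCast_left, mul_sum, mul_sum]
    refine sum_congr rfl fun i _ ↦ ?_
    rw [Nat.add_sub_cancel_left, brPM_add, Nat.sub_sub]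
    ring
  rw [brPM_eq_sum_Cnk hτ hr α z hγβ, sum_mul, sum_congr rfl hterm,
    sum_range_sum_range_sub hn fun j m ↦ Cnk τ r n j α γ (β + k - n) *
      Cnk τ r (k - j) (m - j) β (γ + j) δ * (brPM τ r z γ m * brPM τ r z δ (k - m))]
  simp only [Rnm, sum_mul]

lemma brPM_ne_zero {z a : ℂ} {k : ℕ} (hadd : ∀ i < k, br τ r (a + z + i) ≠ 0)
    (hsub : ∀ i < k, br τ r (a - z + i) ≠ 0) : brPM τ r z a k ≠ 0 :=
  mul_ne_zero (brF_ne_zero_iff.mpr hadd) (brF_ne_zero_iff.mpr hsub)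

lemma brPM_add_natCast_eq_zero (hτ : 0 < τ.im) (hr : r ≠ 0) (a : ℂ) {j k : ℕ} (hj : j < k) :
    brPM τ r (a + j) a k = 0 := by
  have hfactor : brF τ r (a - (a + j)) k = 0 := by
    refine prod_eq_zero (mem_range.mpr hj) ?_
    rw [sub_add_cancel_left, neg_add_cancel, br_zero hτ hr]
  rw [brPM, hfactor, mul_zero]

lemma brPM_add_natCast_self_ne_zero (hτ : 0 < τ.im) (hr : r ≠ 0) {γ : ℂ} {m : ℕ}
    (htwo : ∀ i < 2 * m, br τ r (2 * γ + i) ≠ 0) (hone : ∀ i < m, br τ r (1 + i) ≠ 0) :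
    brPM τ r (γ + m) γ m ≠ 0 := by
  refine brPM_ne_zero (fun i hi ↦ ?_) (fun i hi ↦ ?_)
  · convert htwo (m + i) (by lia) using 2
    push_cast
    ring
  · have hflip : γ - (γ + m) + i = -(1 + (m - (i + 1) : ℕ)) := by
      rw [Nat.cast_sub (Nat.succ_le_of_lt hi)]
      push_cast
      ring
    rw [hflip, br_neg hτ hr]
    exact neg_ne_zero.mpr (hone _ (by lia))

lemma BinomRegular.brPM_add_natCast_ne_zero (hτ : 0 < τ.im) (hr : r ≠ 0) {γ δ : ℂ} {k m : ℕ}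
    (h : BinomRegular τ r k γ δ) : brPM τ r (γ + m) δ (k - m) ≠ 0 := by
  refine brPM_ne_zero (fun i hi ↦ ?_) (fun i hi ↦ ?_)
  · convert h.br_add_ne_zero (m + i) (by lia) using 2
    push_cast
    ring
  · convert (h.symm hτ hr).br_sub_ne_zero (i - m) (by lia) (by lia) using 2
    push_cast
    ring

/-- Evaluating at `z = γ + m` makes the system for the coefficients triangular, since
`[γ ± z]_l` vanishes there for `l > m`. -/
theorem eq_zero_of_sum_mul_brPM_eq_zero (hτ : 0 < τ.im) (hr : r ≠ 0) {γ δ : ℂ} {k : ℕ}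
    (hγδ : BinomRegular τ r k γ δ) (htwo : ∀ i < 2 * k, br τ r (2 * γ + i) ≠ 0) {c : ℕ → ℂ}
    (hsum : ∀ z, ∑ m ∈ range (k + 1), c m * (brPM τ r z γ m * brPM τ r z δ (k - m)) = 0)
    {m : ℕ} (hm : m ≤ k) : c m = 0 := by
  induction m using Nat.strong_induction_on with
  | _ m ih =>
    have hother : ∀ l ∈ range (k + 1), l ≠ m →
        c l * (brPM τ r (γ + m) γ l * brPM τ r (γ + m) δ (k - l)) = 0 := by
      intro l _ hne
      rcases lt_or_gt_of_ne hne with hlt | hgt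
      · rw [ih l hlt (by lia), zero_mul]
      · rw [brPM_add_natCast_eq_zero hτ hr γ hgt, zero_mul, mul_zero]
    have hdiag := hsum (γ + m)
    rw [sum_eq_single_of_mem m (mem_range_succ_iff.mpr hm) hother] at hdiag
    refine (mul_eq_zero.mp hdiag).resolve_right (mul_ne_zero ?_ ?_)
    · exact brPM_add_natCast_self_ne_zero hτ hr (fun i hi ↦ htwo i (by lia))
        fun i hi ↦ hγδ.br_one_add_ne_zero i (by lia)
    · exact hγδ.brPM_add_natCast_ne_zero hτ hr

end Expansion

section Addition

variable {τ : ℂ} {r : ℝ}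

theorem Rnm_eq_sum_of_regular (hτ : 0 < τ.im) (hr : r ≠ 0) {k n m : ℕ} (hn : n ≤ k) (hm : m ≤ k)
    (α : ℂ) {β γ δ ρ σ : ℂ} (hρβ : BinomRegular τ r n ρ (β + k - n))
    (hρσ : BinomRegular τ r k ρ σ) (hγβ : BinomRegular τ r k γ β) (hγσ : BinomRegular τ r k γ σ)
    (hγδ : BinomRegular τ r k γ δ) (htwo : ∀ i < 2 * k, br τ r (2 * γ + i) ≠ 0) :
    Rnm τ r k n m α β γ δ =
      ∑ l ∈ range (k + 1), Rnm τ r k n l α β ρ σ * Rnm τ r k l m ρ σ γ δ := by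
  rw [← sub_eq_zero]
  refine eq_zero_of_sum_mul_brPM_eq_zero hτ hr hγδ htwo (c := fun m ↦ Rnm τ r k n m α β γ δ -
    ∑ l ∈ range (k + 1), Rnm τ r k n l α β ρ σ * Rnm τ r k l m ρ σ γ δ) (fun z ↦ ?_) hm
  have hcompose : brPM τ r z α n * brPM τ r z β (k - n) =
      ∑ m ∈ range (k + 1), (∑ l ∈ range (k + 1), Rnm τ r k n l α β ρ σ * Rnm τ r k l m ρ σ γ δ) *
        (brPM τ r z γ m * brPM τ r z δ (k - m)) := by
    simp only [sum_mul]
    rw [sum_comm, brPM_mul_brPM_eq_sum_Rnm hτ hr α z hn hρβ hρσ]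
    refine sum_congr rfl fun l hl ↦ ?_
    have hl := mem_range_succ_iff.mp hl
    rw [brPM_mul_brPM_eq_sum_Rnm hτ hr ρ z hl (hγσ.add_sub_right hτ hr hl) hγδ, mul_sum]
    simp only [mul_assoc]
  simp only [sub_mul]
  rw [sum_sub_distrib, ← hcompose,
    ← brPM_mul_brPM_eq_sum_Rnm hτ hr α z hn (hγβ.add_sub_right hτ hr hn) hγδ, sub_self]

lemma binomRegular_of_CdenomNZ (hτ : 0 < τ.im) (hr : r ≠ 0) {k : ℕ} {β γ : ℂ}
    (h : ∀ n ≤ k, CdenomNZ τ r k n β γ) : BinomRegular τ r k β γ := by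
  obtain ⟨hone, -, hnonneg, -, hadd⟩ := h k le_rfl
  obtain ⟨-, -, -, hnonpos, -⟩ := h 0 k.zero_le
  rw [brF_ne_zero_iff] at hone hnonneg hadd hnonpos
  refine ⟨fun i hlo hhi ↦ ?_, hadd, hone⟩
  obtain ⟨j, rfl | rfl⟩ := i.eq_nat_or_neg
  · simpa using hnonneg j (by lia)
  · have hneg := hnonpos j (by lia)
    rw [show β - γ + (-j : ℤ) = -(γ - β - (0 : ℕ) + j) by push_cast; ring, br_neg hτ hr]
    exact neg_ne_zero.mpr hneg

lemma eventually_br_affine_ne_zero (hτ : 0 < τ.im) (hr : r ≠ 0) (c : ℂ) {s : ℂ} (hs : s ≠ 0)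
    {ι : Type*} (S : Finset ι) (e : ι → ℂ) :
    ∀ᶠ t in 𝓝[≠] (0 : ℂ), ∀ i ∈ S, br τ r (c + s * t + e i) ≠ 0 := by
  rw [Filter.eventually_all_finset]
  intro i _
  filter_upwards [eventually_br_add_mul_ne_zero hτ hr (c + e i) hs] with t ht
  rwa [add_right_comm]

lemma eventually_binomRegular (hτ : 0 < τ.im) (hr : r ≠ 0) {k : ℕ}
    (hone : ∀ i < k, br τ r (1 + i) ≠ 0) (β γ : ℂ) {s s' : ℂ} (hsub : s - s' ≠ 0)
    (hadd : s + s' ≠ 0) :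
    ∀ᶠ t in 𝓝[≠] (0 : ℂ), BinomRegular τ r k (β + s * t) (γ + s' * t) := by
  filter_upwards [eventually_br_affine_ne_zero hτ hr (β - γ) hsub (Ioo (-k : ℤ) k) Int.cast,
    eventually_br_affine_ne_zero hτ hr (β + γ) hadd (range k) Nat.cast] with t htsub htadd
  refine ⟨fun i hlo hhi ↦ ?_, fun i hi ↦ ?_, hone⟩
  · convert htsub i (mem_Ioo.mpr ⟨hlo, hhi⟩) using 2
    ring
  · convert htadd i (mem_range.mpr hi) using 2
    ring

lemma eventually_generic_along_line (hτ : 0 < τ.im) (hr : r ≠ 0) {k : ℕ}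
    (hone : ∀ i < k, br τ r (1 + i) ≠ 0) (β γ δ σ : ℂ) :
    ∀ᶠ t in 𝓝[≠] (0 : ℂ), BinomRegular τ r k (γ + t) β ∧ BinomRegular τ r k (γ + t) σ ∧
      BinomRegular τ r k (γ + t) (δ + 2 * t) ∧ ∀ i < 2 * k, br τ r (2 * (γ + t) + i) ≠ 0 := by
  filter_upwards [eventually_binomRegular hτ hr hone γ β (s := 1) (s' := 0) (by simp) (by simp),
    eventually_binomRegular hτ hr hone γ σ (s := 1) (s' := 0) (by simp) (by simp),
    eventually_binomRegular hτ hr hone γ δ (s := 1) (s' := 2) (by norm_num) (by norm_num),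
    eventually_br_affine_ne_zero hτ hr (2 * γ) two_ne_zero (range (2 * k)) Nat.cast]
    with t hβ hσ hδ htwo
  simp only [one_mul, zero_mul, add_zero] at hβ hσ hδ
  exact ⟨hβ, hσ, hδ, fun i hi ↦ mul_add 2 γ t ▸ htwo i (mem_range.mpr hi)⟩

lemma continuous_brF (hτ : 0 < τ.im) (hr : r ≠ 0) (n : ℕ) : Continuous (brF τ r · n) :=
  continuous_finsetProd _ fun _ _ ↦
    (differentiable_br hτ hr).continuous.comp (continuous_id.add continuous_const)

section Continuity

variable {X : Type*} [TopologicalSpace X] {a b c d : X → ℂ} {x : X}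

lemma continuousAt_Cnk (hτ : 0 < τ.im) (hr : r ≠ 0) {k n : ℕ} (ha : ContinuousAt a x)
    (hb : ContinuousAt b x) (hc : ContinuousAt c x) (h : CdenomNZ τ r k n (b x) (c x)) :
    ContinuousAt (fun y ↦ Cnk τ r k n (a y) (b y) (c y)) x := by
  have hbrF {f : X → ℂ} (l : ℕ) (hf : ContinuousAt f x) :
      ContinuousAt (fun y ↦ brF τ r (f y) l) x :=
    (continuous_brF hτ hr l).continuousAt.comp hf
  obtain ⟨-, -, hsub, hsub', hadd⟩ := h
  unfold Cnk
  refine ContinuousAt.div (continuousAt_const.mul ?_) ?_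
    (mul_ne_zero (mul_ne_zero hsub hsub') hadd)
  · exact (((hbrF n (by fun_prop)).mul (hbrF n (by fun_prop))).mul
      (hbrF (k - n) (by fun_prop))).mul (hbrF (k - n) (by fun_prop))
  · exact ((hbrF n (by fun_prop)).mul (hbrF (k - n) (by fun_prop))).mul (hbrF k (by fun_prop))

lemma continuousAt_Rnm (hτ : 0 < τ.im) (hr : r ≠ 0) {k n m : ℕ} (ha : ContinuousAt a x)
    (hb : ContinuousAt b x) (hc : ContinuousAt c x) (hd : ContinuousAt d x)
    (h : RdenomNZ τ r k n m (b x) (c x) (d x)) :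
    ContinuousAt (fun y ↦ Rnm τ r k n m (a y) (b y) (c y) (d y)) x := by
  unfold Rnm
  refine tendsto_finsetSum _ fun j hj ↦ ?_
  obtain ⟨houter, hinner⟩ := h j (mem_range_succ_iff.mp hj)
  have hβ : ContinuousAt (fun y ↦ b y + k - n) x :=
    (hb.add continuousAt_const).sub continuousAt_const
  have hγ : ContinuousAt (fun y ↦ c y + j) x := hc.add continuousAt_const
  exact (continuousAt_Cnk hτ hr ha hc hβ houter).mul (continuousAt_Cnk hτ hr hb hγ hd hinner)

end Continuity

end Addition

/-- Addition formula for the elliptic 6j-symbols. -/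
theorem sixj_addition (τ : ℂ) (r : ℝ) (hτ : 0 < τ.im) (hr : 0 < r)
    (k n m : ℕ) (hn : n ≤ k) (hm : m ≤ k) (α β γ δ ρ σ : ℂ)
    (hd1 : RdenomNZ τ r k n m β γ δ)
    (hd2 : ∀ l ≤ k, RdenomNZ τ r k n l β ρ σ)
    (hd3 : ∀ l ≤ k, RdenomNZ τ r k l m σ γ δ) :
    Rnm τ r k n m α β γ δ =
      ∑ l ∈ Finset.range (k + 1), Rnm τ r k n l α β ρ σ * Rnm τ r k l m ρ σ γ δ := by
  have hρβ : BinomRegular τ r n ρ (β + k - n) :=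
    binomRegular_of_CdenomNZ hτ hr.ne' fun j hj ↦ (hd2 k le_rfl j (le_min hj (hj.trans hn))).1
  have hρσ : BinomRegular τ r k ρ σ :=
    binomRegular_of_CdenomNZ hτ hr.ne' fun l hl ↦ by simpa using (hd2 l hl 0 (by lia)).2
  have hgeneric : ∀ᶠ t in 𝓝[≠] (0 : ℂ), Rnm τ r k n m α β (γ + t) (δ + 2 * t) =
      ∑ l ∈ range (k + 1), Rnm τ r k n l α β ρ σ * Rnm τ r k l m ρ σ (γ + t) (δ + 2 * t) := by
    filter_upwards [eventually_generic_along_line hτ hr.ne' hρσ.br_one_add_ne_zero β γ δ σ]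
      with t ⟨hγβ, hγσ, hγδ, htwo⟩
    exact Rnm_eq_sum_of_regular hτ hr.ne' hn hm α hρβ hρσ hγβ hγσ hγδ htwo
  have hlhs : ContinuousAt (fun t ↦ Rnm τ r k n m α β (γ + t) (δ + 2 * t)) 0 :=
    continuousAt_Rnm hτ hr.ne' (by fun_prop) (by fun_prop) (by fun_prop) (by fun_prop)
      (by simpa using hd1)
  have hrhs : ContinuousAt (fun t ↦ ∑ l ∈ range (k + 1),
      Rnm τ r k n l α β ρ σ * Rnm τ r k l m ρ σ (γ + t) (δ + 2 * t)) 0 :=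
    tendsto_finsetSum _ fun l hl ↦ continuousAt_const.mul <|
      continuousAt_Rnm hτ hr.ne' (by fun_prop) (by fun_prop) (by fun_prop) (by fun_prop)
        (by simpa using hd3 l (mem_range_succ_iff.mp hl))
  simpa using ((hlhs.eventuallyEq_nhds_iff_eventuallyEq_nhdsNE hrhs).mp hgeneric).self_of_nhds

end Ell
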